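/- Let ε ≥ δ > 0. The set of almost chaotic (ε,δ)-Delone sets in ℝⁿ is residual (contains a countable intersection of open dense sets) in the space Del_{ε,δ} with the local rubber topology. -/

import Mathlib

open Metric Pointwise

/-- `S` is `δ`-separated. -/
def IsSeparated' {n : ℕ} (δ : ℝ) (S : Set (EuclideanSpace ℝ (Fin n))) : Prop :=
  ∀ x ∈ S, ∀ y ∈ S, x ≠ y → δ ≤ dist x y

/-- `S` is an `(ε,δ)`-Delone subset of ℝⁿ: `ε`-relatively dense and `δ`-separated. -/
def IsDelone {n : ℕ} (ε δ : ℝ) (S : Set (EuclideanSpace ℝ (Fin n))) : Prop :=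
  (∀ x : EuclideanSpace ℝ (Fin n), ∃ y ∈ S, dist x y ≤ ε) ∧ IsSeparated' δ S

/-- The space of `(ε,δ)`-Delone subsets of ℝⁿ. -/
def Del (n : ℕ) (ε δ : ℝ) : Set (Set (EuclideanSpace ℝ (Fin n))) :=
  {S | IsDelone ε δ S}

/-- The basic entourage `N_r` of the local rubber uniformity. -/
def Nrel (n : ℕ) (r : ℝ) (S S' : Set (EuclideanSpace ℝ (Fin n))) : Prop :=
  S ∩ ball (0 : EuclideanSpace ℝ (Fin n)) r ⊆ S' + ball (0 : EuclideanSpace ℝ (Fin n)) (1 / r) ∧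
  S' ∩ ball (0 : EuclideanSpace ℝ (Fin n)) r ⊆ S + ball (0 : EuclideanSpace ℝ (Fin n)) (1 / r)

/-- The translate `S - v` of `S`. -/
def tr {n : ℕ} (v : EuclideanSpace ℝ (Fin n)) (S : Set (EuclideanSpace ℝ (Fin n))) :
    Set (EuclideanSpace ℝ (Fin n)) :=
  (fun x => x - v) '' S

/-- `S` is aperiodic: no nonzero translation fixes it. -/
def IsAperiodicSet {n : ℕ} (S : Set (EuclideanSpace ℝ (Fin n))) : Prop :=
  ∀ v : EuclideanSpace ℝ (Fin n), v ≠ 0 → tr v S ≠ S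

/-- `S` is periodic: its translation symmetry group is a cocompact lattice, i.e. it contains
`n` linearly independent periods. -/
def IsPeriodicSet {n : ℕ} (S : Set (EuclideanSpace ℝ (Fin n))) : Prop :=
  ∃ v : Fin n → EuclideanSpace ℝ (Fin n), LinearIndependent ℝ v ∧ ∀ i, tr (v i) S = S

/-- `S'` belongs to the hull (closure of the translation orbit) of `S`:
every basic rubber neighbourhood of `S'` meets the orbit of `S`. -/
def InHull {n : ℕ} (S S' : Set (EuclideanSpace ℝ (Fin n))) : Prop :=
  ∀ r : ℝ, 0 < r → ∃ v : EuclideanSpace ℝ (Fin n), Nrel n r (tr v S) S'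

/-- `S` is almost chaotic: periodic Delone sets are dense in the hull of `S`. -/
def IsAlmostChaotic {n : ℕ} (ε δ : ℝ) (S : Set (EuclideanSpace ℝ (Fin n))) : Prop :=
  ∀ S' ∈ Del n ε δ, InHull S S' → ∀ r : ℝ, 0 < r →
    ∃ P ∈ Del n ε δ, IsPeriodicSet P ∧ InHull S P ∧ Nrel n r S' P

/-- `F` is an open subset of `Del n ε δ` in the local rubber topology. -/
def IsOpenInDel (n : ℕ) (ε δ : ℝ) (F : Set (Set (EuclideanSpace ℝ (Fin n)))) : Prop :=
  ∀ S ∈ F, ∃ r : ℝ, 0 < r ∧ ∀ S' ∈ Del n ε δ, Nrel n r S S' → S' ∈ F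

/-- `F` is dense in `Del n ε δ` in the local rubber topology. -/
def IsDenseInDel (n : ℕ) (ε δ : ℝ) (F : Set (Set (EuclideanSpace ℝ (Fin n)))) : Prop :=
  ∀ S ∈ Del n ε δ, ∀ r : ℝ, 0 < r → ∃ S' ∈ F, Nrel n r S S'

/-!
A generic Delone set `S` has a dense translation orbit, so its hull is all of `Del n ε δ`, where the
periodic sets are dense.

Both facts come from one construction: patches of Delone sets placed at well-separated centres,
in a way invariant under a group of translations `L`, extend to an `L`-invariant Delone set, since
a maximal `L`-invariant `δ`-separated set is `δ`-relatively dense, hence `ε`-relatively dense.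
Repeating one patch along a lattice gives the periodic sets. Placing a patch of `C` far away from a
patch of `S` gives a set close to `S` whose orbit comes close to `C`, so the Delone sets whose orbit
stably comes close to `C` form a dense open set. As `Del n ε δ` is separable, countably many of
these conditions make the orbit dense.
-/

section Thickening

variable {X : Type*} [PseudoMetricSpace X]

lemma inter_ball_subset_thickening_trans {A B C : Set X} {x₀ : X} {r η θ : ℝ}
    (hAB : A ∩ ball x₀ r ⊆ thickening η B) (hBC : B ∩ ball x₀ (r + η) ⊆ thickening θ C) :
    A ∩ ball x₀ r ⊆ thickening (η + θ) C := by
  intro x hx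
  obtain ⟨y, hyB, hxy⟩ := mem_thickening_iff.1 (hAB hx)
  have hy : dist y x₀ < r + η := by
    linarith [dist_triangle_left y x₀ x, mem_ball.1 hx.2]
  obtain ⟨z, hzC, hyz⟩ := mem_thickening_iff.1 (hBC ⟨hyB, hy⟩)
  exact mem_thickening_iff.2 ⟨z, hzC, by linarith [dist_triangle x y z]⟩

lemma exists_finite_subset_inter_subset_thickening {K : Set X} (hK : TotallyBounded K) {η : ℝ}
    (hη : 0 < η) (D : Set (Set X)) :
    ∃ C ⊆ D, C.Finite ∧
      ∀ P ∈ D, ∃ Q ∈ C, Q ∩ K ⊆ thickening η P ∧ P ∩ K ⊆ thickening η Q := by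
  obtain ⟨t, ht, hKt⟩ := totallyBounded_iff.1 hK (η / 2) (half_pos hη)
  -- A set is known on `K`, up to `η`, from its trace on the finite net `t`.
  let trace (P : Set X) : Set X := t ∩ thickening (η / 2) P
  have subset_of_trace_eq {P Q : Set X} (h : trace P = trace Q) : P ∩ K ⊆ thickening η Q := by
    rintro x ⟨hxP, hxK⟩
    obtain ⟨y, hyt, hxy⟩ := Set.mem_iUnion₂.1 (hKt hxK)
    have hyP : y ∈ trace P := ⟨hyt, mem_thickening_iff.2 ⟨x, hxP, mem_ball'.1 hxy⟩⟩
    obtain ⟨z, hzQ, hyz⟩ := mem_thickening_iff.1 (h ▸ hyP).2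
    exact mem_thickening_iff.2
      ⟨z, hzQ, by linarith [dist_triangle x y z, mem_ball.1 hxy]⟩
  obtain ⟨C, hCD, hC⟩ := Set.exists_subset_bijOn D trace
  have hfin : (trace '' C).Finite :=
    ht.finite_subsets.subset (Set.image_subset_iff.2 fun P _ => Set.inter_subset_left)
  refine ⟨C, hCD, hfin.of_finite_image hC.injOn, fun P hP => ?_⟩
  obtain ⟨Q, hQC, hQP⟩ := hC.surjOn (Set.mem_image_of_mem trace hP)
  exact ⟨Q, hQC, subset_of_trace_eq hQP, subset_of_trace_eq hQP.symm⟩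

end Thickening

section InvariantExtension

variable {X G : Type*}

lemma exists_maximal_invariant_pairwise [VAdd G X] {r : X → X → Prop} {A B : Set X}
    (hBA : B ⊆ A) (hr : B.Pairwise r) (hG : ∀ g : G, ∀ x ∈ B, g +ᵥ x ∈ B) :
    ∃ T, B ⊆ T ∧
      Maximal (fun T => T ⊆ A ∧ T.Pairwise r ∧ ∀ g : G, ∀ x ∈ T, g +ᵥ x ∈ T) T := by
  refine zorn_subset_nonempty {T | T ⊆ A ∧ T.Pairwise r ∧ ∀ g : G, ∀ x ∈ T, g +ᵥ x ∈ T}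
    (fun c hc hchain _ => ⟨⋃₀ c, ⟨?_, ?_, ?_⟩, fun _ => Set.subset_sUnion_of_mem⟩)
    B ⟨hBA, hr, hG⟩
  · exact Set.sUnion_subset fun T hT => (hc hT).1
  · exact (Set.pairwise_sUnion hchain.directedOn).2 fun T hT => (hc hT).2.1
  · rintro g x ⟨T, hT, hx⟩
    exact ⟨T, hT, (hc hT).2.2 g x hx⟩

variable [PseudoMetricSpace X] [AddGroup G] [AddAction G X] [IsIsometricVAdd G X]

lemma pairwise_le_dist_union_orbit {T : Set X} {x : X} {δ : ℝ}
    (hT : T.Pairwise (δ ≤ dist · ·)) (hG : ∀ g : G, ∀ y ∈ T, g +ᵥ y ∈ T)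
    (hx : ∀ y ∈ T, δ ≤ dist x y) (horbit : ∀ g : G, g +ᵥ x ≠ x → δ ≤ dist (g +ᵥ x) x) :
    (T ∪ AddAction.orbit G x).Pairwise (δ ≤ dist · ·) := by
  refine Set.pairwise_union.2 ⟨hT, ?_, ?_⟩
  · rintro _ ⟨g, rfl⟩ _ ⟨h, rfl⟩ hne
    have hdist : dist (g +ᵥ x) (h +ᵥ x) = dist ((-h + g) +ᵥ x) x := by
      rw [← dist_vadd (-h), vadd_vadd, neg_vadd_vadd]
    refine (horbit (-h + g) fun hfix => hne ?_).trans_eq hdist.symm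
    rwa [add_vadd, neg_vadd_eq_iff] at hfix
  · rintro y hy _ ⟨g, rfl⟩ -
    have hfar : δ ≤ dist (g +ᵥ x) y := by
      rw [← dist_vadd (-g), neg_vadd_vadd]
      exact hx _ (hG (-g) y hy)
    exact ⟨dist_comm y _ ▸ hfar, hfar⟩

theorem exists_invariant_separated_relDense_superset {B Ω : Set X} {ε δ : ℝ} (hε : 0 ≤ ε)
    (hδε : δ ≤ ε) (hB : B.Pairwise (δ ≤ dist · ·)) (hGB : ∀ g : G, ∀ x ∈ B, g +ᵥ x ∈ B)
    (hGΩ : ∀ g : G, ∀ x ∈ Ω, g +ᵥ x ∈ Ω)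
    (horbit : ∀ x ∈ Ω, ∀ g : G, g +ᵥ x ≠ x → δ ≤ dist (g +ᵥ x) x)
    (hcover : ∀ x ∉ Ω, ∃ y ∈ B, dist x y ≤ ε) :
    ∃ T, B ⊆ T ∧ T ⊆ B ∪ Ω ∧ (∀ x, ∃ y ∈ T, dist x y ≤ ε) ∧ T.Pairwise (δ ≤ dist · ·) ∧
      ∀ g : G, ∀ x ∈ T, g +ᵥ x ∈ T := by
  obtain ⟨T, hBT, hmax⟩ :=
    exists_maximal_invariant_pairwise (Set.subset_union_left : B ⊆ B ∪ Ω) hB hGB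
  obtain ⟨hTB, hT, hGT⟩ := hmax.prop
  refine ⟨T, hBT, hTB, fun x => ?_, hT, hGT⟩
  by_cases hxΩ : x ∈ Ω
  · -- Otherwise the whole orbit of `x` could be added to the maximal set `T`.
    by_contra! hfar
    have hxT : x ∈ T := by
      refine hmax.le_of_ge ⟨?_, ?_, ?_⟩ Set.subset_union_left
        (Or.inr (AddAction.mem_orbit_self (M := G) x))
      · refine Set.union_subset hTB ?_
        rintro _ ⟨g, rfl⟩
        exact Or.inr (hGΩ g x hxΩ)
      · exact pairwise_le_dist_union_orbit hT hGT (fun y hy => hδε.trans (hfar y hy).le)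
          (horbit x hxΩ)
      · rintro g y (hy | hy)
        · exact Or.inl (hGT g y hy)
        · exact Or.inr ((AddAction.mem_orbit_of_mem_orbit g) hy)
    exact (hfar x hxT).not_ge (dist_self x ▸ hε)
  · obtain ⟨y, hyB, hxy⟩ := hcover x hxΩ
    exact ⟨y, hBT hyB, hxy⟩

end InvariantExtension

section Patches

variable {E ι : Type*} [SeminormedAddCommGroup E] {c : ι → E} {A : ι → Set E} {R ε δ : ℝ}

/-- The union of the patches `A i ∩ ball 0 R`, the `i`-th one moved so that its centre is `c i`.
It is the prescribed part of the Delone sets built below. -/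
def patchUnion (c : ι → E) (A : ι → Set E) (R : ℝ) : Set E :=
  ⋃ i, c i +ᵥ (A i ∩ ball 0 R)

lemma mem_patchUnion {x : E} :
    x ∈ patchUnion c A R ↔ ∃ i, ∃ a ∈ A i, ‖a‖ < R ∧ c i + a = x := by
  simp [patchUnion, Set.mem_vadd_set, and_assoc]

lemma pairwise_le_dist_patchUnion (hA : ∀ i, (A i).Pairwise (δ ≤ dist · ·))
    (hc : Pairwise fun i j => 2 * R + δ ≤ dist (c i) (c j)) :
    (patchUnion c A R).Pairwise (δ ≤ dist · ·) := by
  intro x hx y hy hxy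
  obtain ⟨i, a, ha, haR, rfl⟩ := mem_patchUnion.1 hx
  obtain ⟨j, b, hb, hbR, rfl⟩ := mem_patchUnion.1 hy
  obtain rfl | hij := eq_or_ne i j
  · rw [dist_add_left]
    exact hA i ha hb (ne_of_apply_ne (c i + ·) hxy)
  · have hci : dist (c i) (c i + a) = ‖a‖ := by simp
    have hcj : dist (c j + b) (c j) = ‖b‖ := by simp
    linarith [hc hij, dist_triangle4 (c i) (c i + a) (c j + b) (c j)]

lemma exists_mem_patchUnion_dist_le {i : ι} (hA : ∀ x, ∃ y ∈ A i, dist x y ≤ ε) {x : E}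
    (hx : dist x (c i) < R - ε) : ∃ y ∈ patchUnion c A R, dist x y ≤ ε := by
  obtain ⟨a, ha, hxa⟩ := hA (x - c i)
  have haR : ‖a‖ < R := by
    have := dist_triangle_left a 0 (x - c i)
    rw [dist_zero_right, dist_zero_right, ← dist_eq_norm] at this
    linarith
  refine ⟨c i + a, mem_patchUnion.2 ⟨i, a, ha, haR, rfl⟩, ?_⟩
  rwa [← dist_add_left (c i), add_sub_cancel] at hxa

lemma neg_vadd_patchUnion_inter_ball (hc : Pairwise fun i j => 2 * R ≤ dist (c i) (c j)) (i : ι) :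
    (-c i +ᵥ patchUnion c A R) ∩ ball 0 R = A i ∩ ball 0 R := by
  ext x
  simp only [Set.mem_inter_iff, Set.mem_neg_vadd_set_iff, vadd_eq_add, mem_patchUnion,
    mem_ball_zero_iff]
  refine and_congr_left fun hxR => ⟨?_, fun hx => ⟨i, x, hx, hxR, rfl⟩⟩
  rintro ⟨j, a, ha, haR, hax⟩
  obtain rfl | hij := eq_or_ne i j
  · rwa [← add_left_cancel hax]
  · have hci : dist (c i) (c i + x) = ‖x‖ := by simp
    have hcj : dist (c j) (c j + a) = ‖a‖ := by simp
    rw [hax] at hcj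
    linarith [hc hij, dist_triangle_right (c i) (c j) (c i + x)]

lemma add_mem_patchUnion {l x : E} (hl : ∀ i, ∃ j, c j = l + c i ∧ A j = A i)
    (hx : x ∈ patchUnion c A R) : l + x ∈ patchUnion c A R := by
  obtain ⟨i, a, ha, haR, rfl⟩ := mem_patchUnion.1 hx
  obtain ⟨j, hj, hAj⟩ := hl i
  exact mem_patchUnion.2 ⟨j, a, hAj ▸ ha, haR, by rw [hj, add_assoc]⟩

lemma neg_vadd_inter_ball_of_patchUnion_subset {T : Set E} {ρ : ℝ} (hρ : ρ ≤ R)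
    (hc : Pairwise fun i j => 2 * R ≤ dist (c i) (c j)) (hT : patchUnion c A R ⊆ T)
    (hT' : T ⊆ patchUnion c A R ∪ {x | ∀ i, ρ ≤ dist x (c i)}) (i : ι) :
    (-c i +ᵥ T) ∩ ball 0 ρ = A i ∩ ball 0 ρ := by
  have hpatch : (-c i +ᵥ T) ∩ ball 0 ρ = (-c i +ᵥ patchUnion c A R) ∩ ball 0 ρ := by
    ext x
    simp only [Set.mem_inter_iff, Set.mem_neg_vadd_set_iff, vadd_eq_add, mem_ball_zero_iff]
    refine and_congr_left fun hx => ⟨fun hxT => (hT' hxT).resolve_right fun hfar => ?_, @hT _⟩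
    exact hx.not_ge (by simpa using hfar i)
  rw [hpatch, ← Set.inter_eq_right.2 (ball_subset_ball hρ), ← Set.inter_assoc,
    neg_vadd_patchUnion_inter_ball hc, Set.inter_assoc]

theorem exists_invariant_separated_relDense_of_patches (hδ : 0 ≤ δ) (hδε : δ ≤ ε)
    (L : AddSubgroup E) (hL : ∀ l ∈ L, l ≠ 0 → δ ≤ ‖l‖)
    (hdense : ∀ i x, ∃ y ∈ A i, dist x y ≤ ε) (hsep : ∀ i, (A i).Pairwise (δ ≤ dist · ·))
    (hc : Pairwise fun i j => 2 * R + δ ≤ dist (c i) (c j))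
    (hinv : ∀ l ∈ L, ∀ i, ∃ j, c j = l + c i ∧ A j = A i) :
    ∃ T : Set E, (∀ x, ∃ y ∈ T, dist x y ≤ ε) ∧ T.Pairwise (δ ≤ dist · ·) ∧
      (∀ l ∈ L, ∀ x ∈ T, l + x ∈ T) ∧
      ∀ i, (-c i +ᵥ T) ∩ ball 0 (R - ε) = A i ∩ ball 0 (R - ε) := by
  have : IsIsometricVAdd L E := ⟨fun l => IsometryEquiv.addLeft (l : E) |>.isometry⟩
  let Ω : Set E := {x | ∀ i, R - ε ≤ dist x (c i)}
  have hLΩ (l : L) (x : E) (hx : x ∈ Ω) : (l : E) + x ∈ Ω := fun i => by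
    obtain ⟨j, hj, -⟩ := hinv (-l) (neg_mem l.2) i
    have hdist : dist (l + x) (c i) = dist x (c j) := by
      rw [hj, ← dist_add_left (l : E) x, add_neg_cancel_left]
    exact (hx j).trans_eq hdist.symm
  have horbit (x : E) (l : L) (hne : (l : E) + x ≠ x) : δ ≤ dist (l + x) x :=
    (hL l l.2 fun hl => hne (by rw [hl, zero_add])).trans_eq (by simp)
  have hcover (x : E) (hx : x ∉ Ω) : ∃ y ∈ patchUnion c A R, dist x y ≤ ε := by
    obtain ⟨i, hi⟩ := not_forall.1 hx
    exact exists_mem_patchUnion_dist_le (hdense i) (not_le.1 hi)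
  obtain ⟨T, hT, hT', hTdense, hTsep, hTL⟩ :=
    exists_invariant_separated_relDense_superset (hδ.trans hδε) hδε
      (pairwise_le_dist_patchUnion hsep hc)
      (fun l : L => fun _ => add_mem_patchUnion (hinv l l.2)) hLΩ (fun x _ => horbit x) hcover
  have hc' : Pairwise fun i j => 2 * R ≤ dist (c i) (c j) := hc.mono fun _ _ h => by linarith
  exact ⟨T, hTdense, hTsep, fun l hl => hTL ⟨l, hl⟩,
    neg_vadd_inter_ball_of_patchUnion_subset (by linarith) hc' hT hT'⟩

end Patches

section CubicLattice

variable {ι : Type*} {K : ℝ}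

/-- The lattice `K ℤ^ι` in `ℝ^ι`, the group of periods imposed on periodic Delone sets. -/
noncomputable def cubicLattice (ι : Type*) (K : ℝ) : AddSubgroup (EuclideanSpace ℝ ι) :=
  ⨅ i, (AddSubgroup.zmultiples K).comap (EuclideanSpace.projₗ (𝕜 := ℝ) i).toAddMonoidHom

lemma mem_cubicLattice {x : EuclideanSpace ℝ ι} :
    x ∈ cubicLattice ι K ↔ ∀ i, ∃ k : ℤ, k * K = x i := by
  simp [cubicLattice, AddSubgroup.mem_zmultiples_iff]

lemma single_mem_cubicLattice [DecidableEq ι] (i : ι) :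
    EuclideanSpace.single i K ∈ cubicLattice ι K := by
  refine mem_cubicLattice.2 fun j => ?_
  obtain rfl | hji := eq_or_ne j i
  · exact ⟨1, by simp⟩
  · exact ⟨0, by simp [hji]⟩

lemma le_norm_of_mem_cubicLattice [Fintype ι] {x : EuclideanSpace ℝ ι} (hx : x ∈ cubicLattice ι K)
    (hx0 : x ≠ 0) : K ≤ ‖x‖ := by
  obtain ⟨i, hi⟩ : ∃ i, x i ≠ 0 := by
    by_contra! h
    exact hx0 (PiLp.ext h)
  obtain ⟨k, hk⟩ := mem_cubicLattice.1 hx i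
  have hk1 : (1 : ℝ) ≤ |(k : ℝ)| := by
    exact_mod_cast Int.one_le_abs (by rintro rfl; simp [← hk] at hi)
  calc K ≤ |K| := le_abs_self K
    _ ≤ |(k : ℝ)| * |K| := le_mul_of_one_le_left (abs_nonneg K) hk1
    _ = ‖x i‖ := by rw [← abs_mul, hk, Real.norm_eq_abs]
    _ ≤ ‖x‖ := PiLp.norm_apply_le x i

end CubicLattice

section Rubber

variable {n : ℕ} {r : ℝ} {S S' S'' : Set (EuclideanSpace ℝ (Fin n))}

lemma nrel_iff_subset_thickening :
    Nrel n r S S' ↔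
      S ∩ ball 0 r ⊆ thickening (1 / r) S' ∧ S' ∩ ball 0 r ⊆ thickening (1 / r) S := by
  simp only [Nrel, add_ball_zero]

lemma nrel_of_inter_ball_eq (hr : 0 < r) (h : S ∩ ball 0 r = S' ∩ ball 0 r) : Nrel n r S S' := by
  have hsub (A : Set (EuclideanSpace ℝ (Fin n))) : A ∩ ball 0 r ⊆ thickening (1 / r) A :=
    Set.inter_subset_left.trans (self_subset_thickening (one_div_pos.2 hr) A)
  exact nrel_iff_subset_thickening.2 ⟨h ▸ hsub S', h.symm ▸ hsub S⟩

lemma nrel_refl (hr : 0 < r) (S : Set (EuclideanSpace ℝ (Fin n))) : Nrel n r S S :=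
  nrel_of_inter_ball_eq hr rfl

lemma Nrel.symm (h : Nrel n r S S') : Nrel n r S' S := And.symm h

lemma Nrel.mono {ρ : ℝ} (hr : 0 < r) (hrρ : r ≤ ρ) (h : Nrel n ρ S S') : Nrel n r S S' := by
  rw [nrel_iff_subset_thickening] at h ⊢
  have key {A B : Set (EuclideanSpace ℝ (Fin n))} (hAB : A ∩ ball 0 ρ ⊆ thickening (1 / ρ) B) :
      A ∩ ball 0 r ⊆ thickening (1 / r) B :=
    ((Set.inter_subset_inter_right A (ball_subset_ball hrρ)).trans hAB).trans
      (thickening_mono (one_div_le_one_div_of_le hr hrρ) B)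
  exact ⟨key h.1, key h.2⟩

lemma Nrel.trans (hr : 0 < r) (h : Nrel n (2 * (r + 1)) S S') (h' : Nrel n (2 * (r + 1)) S' S'') :
    Nrel n r S S'' := by
  rw [nrel_iff_subset_thickening] at h h' ⊢
  set ρ := 2 * (r + 1) with hρ
  have hρ_half : 1 / ρ ≤ 1 / 2 := one_div_le_one_div_of_le two_pos (by linarith)
  have hρ_add : 1 / ρ + 1 / ρ ≤ 1 / r := by
    calc 1 / ρ + 1 / ρ = 1 / (r + 1) := by rw [hρ]; field_simp; norm_num
      _ ≤ 1 / r := one_div_le_one_div_of_le hr (by linarith)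
  have key {A B C : Set (EuclideanSpace ℝ (Fin n))}
      (hAB : A ∩ ball 0 ρ ⊆ thickening (1 / ρ) B) (hBC : B ∩ ball 0 ρ ⊆ thickening (1 / ρ) C) :
      A ∩ ball 0 r ⊆ thickening (1 / r) C :=
    (inter_ball_subset_thickening_trans
      ((Set.inter_subset_inter_right _ (ball_subset_ball (by linarith))).trans hAB)
      ((Set.inter_subset_inter_right _ (ball_subset_ball (by linarith))).trans hBC)).trans
      (thickening_mono hρ_add C)
  exact ⟨key h.1 h'.1, key h'.2 h.2⟩

lemma tr_eq_neg_vadd (v : EuclideanSpace ℝ (Fin n)) (S : Set (EuclideanSpace ℝ (Fin n))) :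
    tr v S = -v +ᵥ S := by
  simp only [tr, ← Set.image_vadd, vadd_eq_add, sub_eq_neg_add]

lemma mem_tr {v x : EuclideanSpace ℝ (Fin n)} : x ∈ tr v S ↔ v + x ∈ S := by
  rw [tr_eq_neg_vadd, Set.mem_neg_vadd_set_iff, vadd_eq_add]

lemma Nrel.translate {v : EuclideanSpace ℝ (Fin n)} (hr : 0 < r) (h : Nrel n (r + ‖v‖) S S') :
    Nrel n r (tr v S) (tr v S') := by
  have hη : 1 / (r + ‖v‖) ≤ 1 / r := one_div_le_one_div_of_le hr (by linarith [norm_nonneg v])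
  have key {A B : Set (EuclideanSpace ℝ (Fin n))}
      (hAB : A ∩ ball 0 (r + ‖v‖) ⊆ thickening (1 / (r + ‖v‖)) B) :
      tr v A ∩ ball 0 r ⊆ thickening (1 / r) (tr v B) := by
    rintro x ⟨hxA, hxr⟩
    rw [mem_ball_zero_iff] at hxr
    have hvx : v + x ∈ ball 0 (r + ‖v‖) :=
      mem_ball_zero_iff.2 (by linarith [norm_add_le v x])
    obtain ⟨y, hyB, hxy⟩ := mem_thickening_iff.1 (hAB ⟨mem_tr.1 hxA, hvx⟩)
    refine mem_thickening_iff.2 ⟨-v + y, mem_tr.2 (by simpa using hyB), ?_⟩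
    rw [← dist_add_left v, add_neg_cancel_left]
    exact hxy.trans_le hη
  rw [nrel_iff_subset_thickening] at h ⊢
  exact ⟨key h.1, key h.2⟩

lemma exists_finite_nrel_net (D : Set (Set (EuclideanSpace ℝ (Fin n)))) (hr : 0 < r) :
    ∃ C ⊆ D, C.Finite ∧ ∀ P ∈ D, ∃ Q ∈ C, Nrel n r Q P := by
  simpa only [nrel_iff_subset_thickening] using exists_finite_subset_inter_subset_thickening
    ((isCompact_closedBall 0 r).totallyBounded.subset ball_subset_closedBall)
    (one_div_pos.2 hr) D

theorem exists_seq_nrel_dense {D : Set (Set (EuclideanSpace ℝ (Fin n)))} (hD : D.Nonempty) :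
    ∃ Q : ℕ → Set (EuclideanSpace ℝ (Fin n)),
      (∀ k, Q k ∈ D) ∧ ∀ P ∈ D, ∀ r : ℝ, 0 < r → ∃ k, Nrel n r (Q k) P := by
  choose C hCD hCfin hC using fun m : ℕ => exists_finite_nrel_net D m.cast_add_one_pos
  have hcount : (⋃ m, C m).Countable := Set.countable_iUnion fun m => (hCfin m).countable
  have hne : (⋃ m, C m).Nonempty := by
    obtain ⟨P, hP⟩ := hD
    obtain ⟨Q, hQ, -⟩ := hC 0 P hP
    exact ⟨Q, Set.mem_iUnion_of_mem 0 hQ⟩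
  obtain ⟨Q, hQ⟩ := hcount.exists_eq_range hne
  refine ⟨Q, fun k => Set.iUnion_subset hCD (hQ ▸ Set.mem_range_self k), fun P hP r hr => ?_⟩
  obtain ⟨m, hm⟩ := exists_nat_ge r
  obtain ⟨Q', hQ', hQ'P⟩ := hC m P hP
  obtain ⟨k, rfl⟩ : Q' ∈ Set.range Q := hQ ▸ Set.mem_iUnion_of_mem m hQ'
  exact ⟨k, hQ'P.mono hr (by linarith)⟩

end Rubber

section Delone

variable {n : ℕ} {ε δ r : ℝ} {S C : Set (EuclideanSpace ℝ (Fin n))}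

lemma mem_del_iff :
    S ∈ Del n ε δ ↔ (∀ x, ∃ y ∈ S, dist x y ≤ ε) ∧ S.Pairwise (δ ≤ dist · ·) :=
  Iff.rfl

theorem del_nonempty (hδ : 0 ≤ δ) (hδε : δ ≤ ε) : (Del n ε δ).Nonempty := by
  obtain ⟨T, hTdense, hTsep, -⟩ := exists_invariant_separated_relDense_of_patches
    (E := EuclideanSpace ℝ (Fin n)) (c := Empty.elim) (A := Empty.elim) (R := 0) hδ hδε ⊥
    (fun l hl hl0 => (hl0 hl).elim) nofun nofun nofun nofun
  exact ⟨T, mem_del_iff.2 ⟨hTdense, hTsep⟩⟩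

lemma isPeriodicSet_of_forall_add_mem {K : ℝ} (hK : K ≠ 0)
    (h : ∀ l ∈ cubicLattice (Fin n) K, ∀ x ∈ S, l + x ∈ S) : IsPeriodicSet S := by
  refine ⟨fun i => EuclideanSpace.single i K,
    PiLp.linearIndependent_single_of_ne_zero 2 ℝ fun _ => hK, fun i => Set.ext fun x => ?_⟩
  have hi := single_mem_cubicLattice (K := K) i
  rw [mem_tr]
  exact ⟨fun hx => by simpa using h _ (neg_mem hi) _ hx, h _ hi x⟩

theorem exists_isPeriodicSet_mem_del_nrel (hδ : 0 < δ) (hδε : δ ≤ ε) (hS : S ∈ Del n ε δ)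
    (hr : 0 < r) : ∃ P ∈ Del n ε δ, IsPeriodicSet P ∧ Nrel n r S P := by
  set K : ℝ := 2 * (r + ε) + δ
  have hδK : δ ≤ K := le_add_of_nonneg_left (by linarith)
  have hLK (i j : cubicLattice (Fin n) K) (hij : i ≠ j) :
      K ≤ dist (i : EuclideanSpace ℝ (Fin n)) j :=
    (le_norm_of_mem_cubicLattice (sub_mem i.2 j.2)
      (sub_ne_zero.2 (Subtype.coe_ne_coe.2 hij))).trans_eq (dist_eq_norm _ _).symm
  obtain ⟨hSdense, hSsep⟩ := mem_del_iff.1 hS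
  obtain ⟨P, hPdense, hPsep, hPL, hPS⟩ :=
    exists_invariant_separated_relDense_of_patches (c := ((↑) : cubicLattice (Fin n) K → _))
      (A := fun _ => S) (R := r + ε) hδ.le hδε (cubicLattice (Fin n) K)
      (fun l hl hl0 => hδK.trans (le_norm_of_mem_cubicLattice hl hl0))
      (fun _ => hSdense) (fun _ => hSsep) hLK (fun l hl i => ⟨⟨l, hl⟩ + i, rfl, rfl⟩)
  refine ⟨P, mem_del_iff.2 ⟨hPdense, hPsep⟩,
    isPeriodicSet_of_forall_add_mem (hδ.trans_le hδK).ne' hPL, nrel_of_inter_ball_eq hr ?_⟩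
  simpa using (hPS 0).symm

theorem exists_mem_del_inter_ball_eq (hδ : 0 ≤ δ) (hδε : δ ≤ ε) (hS : S ∈ Del n ε δ)
    (hC : C ∈ Del n ε δ) (r : ℝ) :
    ∃ T ∈ Del n ε δ, T ∩ ball 0 r = S ∩ ball 0 r ∧
      ∃ v, tr v T ∩ ball 0 r = C ∩ ball 0 r := by
  obtain ⟨hSdense, hSsep⟩ := mem_del_iff.1 hS
  obtain ⟨hCdense, hCsep⟩ := mem_del_iff.1 hC
  cases subsingleton_or_nontrivial (EuclideanSpace ℝ (Fin n)) with
  | inl _ =>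
    -- In dimension `0` there is no room for a second patch, but `S` and `C` coincide.
    obtain ⟨x, hxS, -⟩ := hSdense 0
    obtain ⟨y, hyC, -⟩ := hCdense 0
    have hSC : tr 0 S = C := by
      ext z
      rw [mem_tr, Subsingleton.elim (0 + z) x, Subsingleton.elim z y]
      exact iff_of_true hxS hyC
    exact ⟨S, hS, rfl, 0, by rw [hSC]⟩
  | inr _ =>
    obtain ⟨v, hv⟩ := NormedSpace.exists_lt_norm ℝ (EuclideanSpace ℝ (Fin n))
      (2 * (r + ε) + δ)
    have hcentres :
        Pairwise fun i j : Bool => 2 * (r + ε) + δ ≤ dist (cond i v 0) (cond j v 0) := by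
      rintro (_ | _) (_ | _) hij <;> simp_all [hv.le]
    obtain ⟨T, hTdense, hTsep, -, hT⟩ :=
      exists_invariant_separated_relDense_of_patches (c := (cond · v 0)) (A := (cond · C S))
        (R := r + ε) hδ hδε ⊥ (fun l hl hl0 => (hl0 hl).elim)
        (Bool.forall_bool.2 ⟨hSdense, hCdense⟩) (Bool.forall_bool.2 ⟨hSsep, hCsep⟩) hcentres
        (fun l hl i => ⟨i, by simp [AddSubgroup.mem_bot.1 hl], rfl⟩)
    refine ⟨T, mem_del_iff.2 ⟨hTdense, hTsep⟩, by simpa using hT false, v, ?_⟩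
    simpa [tr_eq_neg_vadd] using hT true

end Delone

section Generic

variable {n : ℕ} {ε δ r : ℝ} {A : Set (Set (EuclideanSpace ℝ (Fin n)))}
  {S C : Set (EuclideanSpace ℝ (Fin n))}

/-- The interior of `A` in `Del n ε δ` for the local rubber topology. -/
def interiorInDel (n : ℕ) (ε δ : ℝ) (A : Set (Set (EuclideanSpace ℝ (Fin n)))) :
    Set (Set (EuclideanSpace ℝ (Fin n))) :=
  {S ∈ Del n ε δ | ∃ r : ℝ, 0 < r ∧ ∀ S' ∈ Del n ε δ, Nrel n r S S' → S' ∈ A}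

lemma interiorInDel_subset_del : interiorInDel n ε δ A ⊆ Del n ε δ := fun _ hS => hS.1

lemma interiorInDel_subset : interiorInDel n ε δ A ⊆ A := by
  rintro S ⟨hS, r, hr, hA⟩
  exact hA S hS (nrel_refl hr S)

lemma isOpenInDel_interiorInDel : IsOpenInDel n ε δ (interiorInDel n ε δ A) := by
  rintro S ⟨-, r, hr, hA⟩
  exact ⟨2 * (r + 1), by positivity, fun S' hS' hSS' => ⟨hS', 2 * (r + 1), by positivity,
    fun S'' hS'' hS'S'' => hA S'' hS'' (hSS'.trans hr hS'S'')⟩⟩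

/-- The sets whose translation orbit meets the basic rubber neighbourhood of `C` of parameter `r`.
By definition, `C` is in the hull of `S` when `S` belongs to `orbitNear n r C` for all `r > 0`. -/
def orbitNear (n : ℕ) (r : ℝ) (C : Set (EuclideanSpace ℝ (Fin n))) :
    Set (Set (EuclideanSpace ℝ (Fin n))) :=
  {S | ∃ v, Nrel n r (tr v S) C}

lemma isDenseInDel_interiorInDel_orbitNear (hδ : 0 ≤ δ) (hδε : δ ≤ ε) (hr : 0 < r)
    (hC : C ∈ Del n ε δ) : IsDenseInDel n ε δ (interiorInDel n ε δ (orbitNear n r C)) := by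
  intro S hS s hs
  set m : ℝ := 2 * (r + 1)
  have hm : 0 < m := by positivity
  obtain ⟨T, hT, hTS, v, hTC⟩ := exists_mem_del_inter_ball_eq hδ hδε hS hC (max s m)
  have hST : Nrel n s S T :=
    (nrel_of_inter_ball_eq (lt_max_of_lt_left hs) hTS.symm).mono hs (le_max_left s m)
  have hvTC : Nrel n m (tr v T) C :=
    (nrel_of_inter_ball_eq (lt_max_of_lt_left hs) hTC).mono hm (le_max_right s m)
  exact ⟨T, ⟨hT, m + ‖v‖, by positivity, fun S' _ hTS' =>
    ⟨v, (hTS'.translate hm).symm.trans hr hvTC⟩⟩, hST⟩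

lemma inHull_of_forall_mem_orbitNear {κ : Type*} {Q : κ → Set (EuclideanSpace ℝ (Fin n))}
    (hQ : ∀ s : ℝ, 0 < s → ∃ k, Nrel n s (Q k) C)
    (hS : ∀ (m : ℕ) (k : κ), S ∈ orbitNear n (m + 1) (Q k)) : InHull S C := by
  intro r hr
  obtain ⟨m, hm⟩ := exists_nat_ge (2 * (r + 1))
  have hr' : 0 < 2 * (r + 1) := by positivity
  obtain ⟨k, hk⟩ := hQ _ hr'
  obtain ⟨v, hv⟩ := hS m k
  exact ⟨v, (hv.mono hr' (by linarith)).trans hr hk⟩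

lemma isAlmostChaotic_of_forall_inHull (hδ : 0 < δ) (hδε : δ ≤ ε)
    (hS : ∀ P ∈ Del n ε δ, InHull S P) : IsAlmostChaotic ε δ S := by
  intro S' hS' _ r hr
  obtain ⟨P, hP, hper, hS'P⟩ := exists_isPeriodicSet_mem_del_nrel hδ hδε hS' hr
  exact ⟨P, hP, hper, hS P hP, hS'P⟩

end Generic

/-- Being almost chaotic is generic in `Del_{ε,δ}` for `ε ≥ δ > 0`. -/
theorem almostChaotic_generic (n : ℕ) (ε δ : ℝ) (hδ : 0 < δ) (hεδ : δ ≤ ε) :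
    ∃ F : ℕ → Set (Set (EuclideanSpace ℝ (Fin n))),
      (∀ k, F k ⊆ Del n ε δ ∧ IsOpenInDel n ε δ (F k) ∧ IsDenseInDel n ε δ (F k)) ∧
      ∀ S, (∀ k, S ∈ F k) → S ∈ Del n ε δ ∧ IsAlmostChaotic ε δ S := by
  obtain ⟨Q, hQ, hQdense⟩ := exists_seq_nrel_dense (del_nonempty (n := n) hδ.le hεδ)
  let F (k : ℕ) := interiorInDel n ε δ (orbitNear n (k.unpair.1 + 1) (Q k.unpair.2))
  refine ⟨F, fun k => ⟨interiorInDel_subset_del, isOpenInDel_interiorInDel,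
    isDenseInDel_interiorInDel_orbitNear hδ.le hεδ (by positivity) (hQ _)⟩, fun S hS => ?_⟩
  have hSQ (m k : ℕ) : S ∈ orbitNear n (m + 1) (Q k) := by
    simpa [F] using interiorInDel_subset (hS (Nat.pair m k))
  exact ⟨interiorInDel_subset_del (hS 0), isAlmostChaotic_of_forall_inHull hδ hεδ fun P hP =>
    inHull_of_forall_mem_orbitNear (hQdense P hP) hSQ⟩
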